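/- Absorption property: for every n ≥ 1, a braid β ∈ B_∞ belongs to the subgroup B_n if and only if β ▷ 1^[n] = 1^[n+1], where 1^[m] denotes the m-th right power of the unit braid under ▷ (so that 1^[m] = σ_{m−1} ⋯ σ₂ σ₁). -/

import Mathlib

/-- The braid relations on generators indexed by `ℕ` (generator `i` stands for
the Artin generator `σ_{i+1}` of the paper). -/
def braidRels : Set (FreeGroup ℕ) :=
  {r | (∃ i j : ℕ, i + 2 ≤ j ∧
          r = .of i * .of j * (.of i)⁻¹ * (.of j)⁻¹) ∨
       (∃ i : ℕ,
          r = .of i * .of (i + 1) * .of i *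
              (.of (i + 1) * .of i * .of (i + 1))⁻¹)}

/-- The braid group on infinitely many strands. -/
abbrev Binf : Type := PresentedGroup braidRels

/-- `σ i` is the Artin generator `σ_{i+1}` of the paper (0-indexed). -/
def σ (i : ℕ) : Binf := PresentedGroup.of i

lemma mk_rel_eq_one {r : FreeGroup ℕ} (h : r ∈ braidRels) :
    PresentedGroup.mk braidRels r = 1 :=
  (QuotientGroup.eq_one_iff r).mpr (Subgroup.subset_normalClosure h)

lemma shift_lift_eq_one :
    ∀ r ∈ braidRels, FreeGroup.lift (fun n => σ (n + 1)) r = 1 := by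
  intro r hr
  have key : ∀ s ∈ braidRels, FreeGroup.lift (fun n => σ (n + 1)) s
      = PresentedGroup.mk braidRels (FreeGroup.map (· + 1) s) := by
    intro s _
    have : (FreeGroup.lift (fun n => σ (n + 1)) : FreeGroup ℕ →* Binf)
        = (PresentedGroup.mk braidRels).comp (FreeGroup.map (· + 1)) := by
      apply FreeGroup.ext_hom
      intro x
      simp [σ, PresentedGroup.of]
    rw [this]; rfl
  rw [key r hr]
  apply mk_rel_eq_one
  rcases hr with ⟨i, j, hij, rfl⟩ | ⟨i, rfl⟩
  · exact Or.inl ⟨i + 1, j + 1, by omega, by simp⟩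
  · exact Or.inr ⟨i + 1, by simp⟩

/-- The shift endomorphism of the braid group, mapping `σ i` to `σ (i+1)`. -/
def sh : Binf →* Binf := PresentedGroup.toGroup shift_lift_eq_one

@[simp] lemma sh_σ (i : ℕ) : sh (σ i) = σ (i + 1) :=
  PresentedGroup.toGroup.of shift_lift_eq_one

/-- The shifted-conjugation (selfdistributive) operation on `Binf`:
`β₁ ▷ β₂ = β₁ · sh β₂ · σ₁ · (sh β₁)⁻¹`. -/
def sc (β₁ β₂ : Binf) : Binf := β₁ * sh β₂ * σ 0 * (sh β₁)⁻¹

/-- `rpow a m` is the `m`-th right power `a^[m]` (defined for `m ≥ 1`;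
`rpow a 0` is a junk value). -/
def rpow (a : Binf) : ℕ → Binf
  | 0 => a
  | 1 => a
  | m + 2 => sc a (rpow a (m + 1))

/-- The subgroup `B_n` of `Binf` generated by the paper's `σ₁, …, σ_{n-1}`
(our `σ 0, …, σ (n-2)`). -/
def Bfin (n : ℕ) : Subgroup Binf := Subgroup.closure (σ '' {i | i + 2 ≤ n})

/-!
Write `δ = 1^[n+1] = σ_n ⋯ σ₁`. The equation `β ▷ 1^[n] = 1^[n+1]` says `β δ = δ sh(β)`. Since `δ`
conjugates `σ_{i+1}` to `σ_i` for `i < n`, every `β ∈ B_n` satisfies it.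

For the converse, let `B_∞` act on pairs (strand position, braid): a braid follows the strand
starting at the given position and multiplies the second component by what is left of the braid
once that strand has been removed. Starting from `(0, 1)`, the braid `δ sh(β)` leads to `(n, β)`,
because removing the first strand of `sh(β)` gives back `β` and `δ` carries the first strand over
all the others. If `β ∈ B_{m+1}` with `n ≤ m`, then `β δ` leads to a pair whose second component
is in `B_m`, because removing one of the `m + 1` strands of `β` leaves a braid on `m` strands.
Hence `β ∈ B_m`, and descending from a large `m` one reaches `β ∈ B_n`.
-/

lemma commute_σ {i j : ℕ} (h : i + 2 ≤ j) : Commute (σ i) (σ j) := by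
  have hrel : σ i * σ j * (σ i)⁻¹ * (σ j)⁻¹ = 1 := mk_rel_eq_one (Or.inl ⟨i, j, h, rfl⟩)
  rwa [mul_inv_eq_one, mul_inv_eq_iff_eq_mul] at hrel

lemma σ_mul_σ_succ_mul_σ (i : ℕ) : σ i * σ (i + 1) * σ i = σ (i + 1) * σ i * σ (i + 1) := by
  have hrel : σ i * σ (i + 1) * σ i * (σ (i + 1) * σ i * σ (i + 1))⁻¹ = 1 :=
    mk_rel_eq_one (Or.inr ⟨i, rfl⟩)
  rwa [mul_inv_eq_one] at hrel

lemma closure_range_σ : Subgroup.closure (Set.range σ) = ⊤ :=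
  PresentedGroup.closure_range_of braidRels

lemma lift_eq_one_of_mem_braidRels {G : Type*} [Group G] {f : ℕ → G}
    (hcomm : ∀ i j, i + 2 ≤ j → Commute (f i) (f j))
    (hbraid : ∀ i, f i * f (i + 1) * f i = f (i + 1) * f i * f (i + 1)) :
    ∀ r ∈ braidRels, FreeGroup.lift f r = 1 := by
  rintro r (⟨i, j, hij, rfl⟩ | ⟨i, rfl⟩)
  · simp only [map_mul, map_inv, FreeGroup.lift_apply_of]
    rw [mul_inv_eq_one, mul_inv_eq_iff_eq_mul, (hcomm i j hij).eq]
  · simp only [map_mul, map_inv, FreeGroup.lift_apply_of]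
    rw [mul_inv_eq_one, hbraid i]

lemma σ_mem_Bfin {i n : ℕ} (h : i + 2 ≤ n) : σ i ∈ Bfin n :=
  Subgroup.subset_closure ⟨i, h, rfl⟩

lemma Bfin_mono : Monotone Bfin := fun _ _ h =>
  Subgroup.closure_mono (Set.image_mono fun _ hi => le_trans hi h)

lemma iSup_Bfin : ⨆ n, Bfin n = ⊤ := by
  rw [eq_top_iff, ← closure_range_σ, Subgroup.closure_le]
  rintro _ ⟨i, rfl⟩
  exact Subgroup.mem_iSup_of_mem (i + 2) (σ_mem_Bfin le_rfl)

lemma exists_ge_mem_Bfin (n : ℕ) (β : Binf) : ∃ m ≥ n, β ∈ Bfin m := by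
  have hβ : β ∈ ⨆ m, Bfin m := iSup_Bfin ▸ Subgroup.mem_top β
  obtain ⟨m, hm⟩ := (Subgroup.mem_iSup_of_directed Bfin_mono.directed_le).mp hβ
  exact ⟨max n m, le_max_left n m, Bfin_mono (le_max_right n m) hm⟩

lemma rpow_one_eq_sh_mul_σ_zero (k : ℕ) : rpow 1 (k + 2) = sh (rpow 1 (k + 1)) * σ 0 := by
  simp [rpow, sc]

lemma rpow_one_eq_σ_mul (k : ℕ) : rpow 1 (k + 2) = σ k * rpow 1 (k + 1) := by
  induction k with
  | zero => simp [rpow, sc]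
  | succ k ih =>
    calc rpow 1 (k + 3) = sh (rpow 1 (k + 2)) * σ 0 := rpow_one_eq_sh_mul_σ_zero (k + 1)
      _ = σ (k + 1) * (sh (rpow 1 (k + 1)) * σ 0) := by rw [ih, map_mul, sh_σ, mul_assoc]
      _ = σ (k + 1) * rpow 1 (k + 2) := by rw [rpow_one_eq_sh_mul_σ_zero]

lemma sc_rpow_one_eq_iff (k : ℕ) (β : Binf) :
    sc β (rpow 1 (k + 1)) = rpow 1 (k + 2) ↔ SemiconjBy (rpow 1 (k + 2)) (sh β) β := by
  rw [sc, mul_inv_eq_iff_eq_mul, mul_assoc, ← rpow_one_eq_sh_mul_σ_zero, SemiconjBy, eq_comm]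

lemma commute_rpow_one_σ {n j : ℕ} (h : n < j) : Commute (rpow 1 (n + 1)) (σ j) := by
  induction n with
  | zero => exact Commute.one_left (σ j)
  | succ n ih =>
    rw [rpow_one_eq_σ_mul]
    exact (commute_σ h).mul_left (ih (by omega))

lemma semiconjBy_rpow_one_σ {i n : ℕ} (h : i + 2 ≤ n) :
    SemiconjBy (rpow 1 (n + 1)) (σ (i + 1)) (σ i) := by
  induction n, h using Nat.le_induction with
  | base =>
    have hbraid : SemiconjBy (σ (i + 1) * σ i) (σ (i + 1)) (σ i) := by
      rw [SemiconjBy, ← σ_mul_σ_succ_mul_σ, mul_assoc]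
    rw [rpow_one_eq_σ_mul, rpow_one_eq_σ_mul, ← mul_assoc]
    exact hbraid.mul_left (commute_rpow_one_σ (lt_add_one i))
  | succ n h ih =>
    rw [rpow_one_eq_σ_mul]
    exact SemiconjBy.mul_left (commute_σ h).symm ih

lemma semiconjBy_rpow_one_of_mem_Bfin {n : ℕ} {β : Binf} (hβ : β ∈ Bfin n) :
    SemiconjBy (rpow 1 (n + 1)) (sh β) β := by
  induction hβ using Subgroup.closure_induction with
  | mem _ hx =>
    obtain ⟨i, hi, rfl⟩ := hx
    simpa only [sh_σ] using semiconjBy_rpow_one_σ hi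
  | one => simp
  | mul _ _ _ _ hx hy => simpa only [map_mul] using hx.mul_right hy
  | inv _ _ hx => simpa only [map_inv] using hx.inv_right

/-- The braid that remains of `σ i` when the strand starting at position `k` is removed. The
truncated subtraction is harmless, since `k < i` forces `i ≠ 0`. -/
def crossingWithout (i k : ℕ) : Binf :=
  if k < i then σ (i - 1) else if i + 1 < k then σ i else 1

/-- The action of the crossing `σ i` on pairs `(k, b)`, where `k` is the current position of a
marked strand and `b` is the braid formed so far by the other strands. -/
def crossingPerm (i : ℕ) : Equiv.Perm (ℕ × Binf) :=
  Equiv.prodShear (Equiv.swap i (i + 1)) fun k => Equiv.mulLeft (crossingWithout i k)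

section crossingPerm

variable {i k : ℕ} (b : Binf)

lemma crossingPerm_apply (i : ℕ) (p : ℕ × Binf) :
    crossingPerm i p = (Equiv.swap i (i + 1) p.1, crossingWithout i p.1 * p.2) := rfl

lemma crossingPerm_apply_of_lt (h : k < i) : crossingPerm i (k, b) = (k, σ (i - 1) * b) := by
  rw [crossingPerm_apply, Equiv.swap_apply_of_ne_of_ne (by omega) (by omega), crossingWithout,
    if_pos h]

lemma crossingPerm_apply_self (i : ℕ) : crossingPerm i (i, b) = (i + 1, b) := by
  simp [crossingPerm_apply, crossingWithout]

lemma crossingPerm_apply_succ (i : ℕ) : crossingPerm i (i + 1, b) = (i, b) := by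
  simp [crossingPerm_apply, crossingWithout]

lemma crossingPerm_apply_of_gt (h : i + 1 < k) : crossingPerm i (k, b) = (k, σ i * b) := by
  rw [crossingPerm_apply, Equiv.swap_apply_of_ne_of_ne (by omega) (by omega), crossingWithout,
    if_neg (by omega), if_pos h]

end crossingPerm

lemma commute_crossingPerm {i j : ℕ} (h : i + 2 ≤ j) :
    Commute (crossingPerm i) (crossingPerm j) := by
  ext1 ⟨k, b⟩
  simp only [Equiv.Perm.mul_apply]
  obtain hk | rfl | rfl | hk : k < i ∨ k = i ∨ k = i + 1 ∨ i + 1 < k := by omega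
  · have hj : k < j := by omega
    simp only [crossingPerm_apply_of_lt _ hk, crossingPerm_apply_of_lt _ hj, ← mul_assoc]
    rw [(commute_σ (by omega : i - 1 + 2 ≤ j - 1)).eq]
  · simp only [crossingPerm_apply_self, crossingPerm_apply_of_lt _ (by omega : k < j),
      crossingPerm_apply_of_lt _ (by omega : k + 1 < j)]
  · simp only [crossingPerm_apply_succ, crossingPerm_apply_of_lt _ (by omega : i + 1 < j),
      crossingPerm_apply_of_lt _ (by omega : i < j)]
  obtain hj | rfl | rfl | hj : k < j ∨ k = j ∨ k = j + 1 ∨ j + 1 < k := by omega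
  · simp only [crossingPerm_apply_of_gt _ hk, crossingPerm_apply_of_lt _ hj, ← mul_assoc]
    rw [(commute_σ (by omega : i + 2 ≤ j - 1)).eq]
  · simp only [crossingPerm_apply_self, crossingPerm_apply_of_gt _ hk,
      crossingPerm_apply_of_gt _ (by omega : i + 1 < k + 1)]
  · simp only [crossingPerm_apply_succ, crossingPerm_apply_of_gt _ hk,
      crossingPerm_apply_of_gt _ (by omega : i + 1 < j)]
  · simp only [crossingPerm_apply_of_gt _ hk, crossingPerm_apply_of_gt _ hj, ← mul_assoc]
    rw [(commute_σ h).eq]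

lemma crossingPerm_mul_succ_mul (i : ℕ) :
    crossingPerm i * crossingPerm (i + 1) * crossingPerm i =
      crossingPerm (i + 1) * crossingPerm i * crossingPerm (i + 1) := by
  ext1 ⟨k, b⟩
  simp only [Equiv.Perm.mul_apply]
  obtain hk | rfl | rfl | rfl | hk :
      k < i ∨ k = i ∨ k = i + 1 ∨ k = i + 1 + 1 ∨ i + 1 + 1 < k := by omega
  · obtain ⟨i, rfl⟩ := Nat.exists_eq_add_one_of_ne_zero (Nat.ne_zero_of_lt hk)
    simp only [crossingPerm_apply_of_lt _ hk,
      crossingPerm_apply_of_lt _ (by omega : k < i + 1 + 1), Nat.add_sub_cancel, ← mul_assoc]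
    rw [σ_mul_σ_succ_mul_σ]
  · simp only [crossingPerm_apply_self, crossingPerm_apply_of_lt _ (lt_add_one k),
      crossingPerm_apply_of_gt _ (lt_add_one (k + 1)), Nat.add_sub_cancel]
  · simp only [crossingPerm_apply_self, crossingPerm_apply_succ,
      crossingPerm_apply_of_lt _ (lt_add_one i), crossingPerm_apply_of_gt _ (lt_add_one (i + 1)),
      Nat.add_sub_cancel]
  · simp only [crossingPerm_apply_succ, crossingPerm_apply_of_lt _ (lt_add_one i),
      crossingPerm_apply_of_gt _ (lt_add_one (i + 1)), Nat.add_sub_cancel]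
  · simp only [crossingPerm_apply_of_gt _ hk, crossingPerm_apply_of_gt _ (by omega : i + 1 < k),
      ← mul_assoc]
    rw [σ_mul_σ_succ_mul_σ]

/-- The strand-removing action of the braid group on pairs `(k, b)`: a braid `β` sends `k` to the
final position of the strand of `β` that starts at `k`, and multiplies `b` on the left by the
braid that remains of `β` when this strand is removed. Braid words are read from right to left. -/
def strandRemoval : Binf →* Equiv.Perm (ℕ × Binf) :=
  PresentedGroup.toGroup <| lift_eq_one_of_mem_braidRels
    (fun _ _ => commute_crossingPerm) crossingPerm_mul_succ_mul

@[simp] lemma strandRemoval_σ (i : ℕ) : strandRemoval (σ i) = crossingPerm i :=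
  PresentedGroup.toGroup.of _

lemma strandRemoval_sh_apply_zero (β b : Binf) : strandRemoval (sh β) (0, b) = (0, β * b) := by
  have hβ : β ∈ Subgroup.closure (Set.range σ) := closure_range_σ ▸ Subgroup.mem_top β
  induction hβ using Subgroup.closure_induction generalizing b with
  | mem _ hx =>
    obtain ⟨i, rfl⟩ := hx
    rw [sh_σ, strandRemoval_σ, crossingPerm_apply_of_lt b i.add_one_pos, Nat.add_sub_cancel]
  | one => simp
  | mul x y _ _ hx hy => rw [map_mul, map_mul, Equiv.Perm.mul_apply, hy, hx, mul_assoc]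
  | inv x _ hx => rw [map_inv, map_inv, Equiv.Perm.inv_eq_iff_eq, hx, mul_inv_cancel_left]

lemma strandRemoval_rpow_one_apply_zero (n : ℕ) (b : Binf) :
    strandRemoval (rpow 1 (n + 1)) (0, b) = (n, b) := by
  induction n with
  | zero => simp [rpow]
  | succ n ih =>
    rw [rpow_one_eq_σ_mul, map_mul, Equiv.Perm.mul_apply, ih, strandRemoval_σ,
      crossingPerm_apply_self]

lemma crossingWithout_mem_Bfin {i k m : ℕ} (hi : i + 1 ≤ m) (hk : k ≤ m) :
    crossingWithout i k ∈ Bfin m := by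
  unfold crossingWithout
  split_ifs
  · exact σ_mem_Bfin (by omega)
  · exact σ_mem_Bfin (by omega)
  · exact one_mem _

lemma swap_succ_le_iff {i k m : ℕ} (hi : i + 1 ≤ m) : Equiv.swap i (i + 1) k ≤ m ↔ k ≤ m := by
  rw [Equiv.swap_apply_def]
  split_ifs <;> omega

lemma strandRemoval_mem_Iic_prod_Bfin_iff {m : ℕ} {β : Binf} (hβ : β ∈ Bfin (m + 1))
    (p : ℕ × Binf) :
    strandRemoval β p ∈ Set.Iic m ×ˢ (Bfin m : Set Binf) ↔
      p ∈ Set.Iic m ×ˢ (Bfin m : Set Binf) := by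
  induction hβ using Subgroup.closure_induction generalizing p with
  | mem _ hx =>
    obtain ⟨i, hi, rfl⟩ := hx
    have hi : i + 1 ≤ m := Nat.le_of_succ_le_succ hi
    rw [strandRemoval_σ, crossingPerm_apply, Set.mem_prod, Set.mem_prod, Set.mem_Iic,
      Set.mem_Iic, swap_succ_le_iff hi]
    exact and_congr_right fun hk =>
      (Bfin m).mul_mem_cancel_left (crossingWithout_mem_Bfin hi hk)
  | one => simp
  | mul x y _ _ hx hy => rw [map_mul, Equiv.Perm.mul_apply, hx, hy]
  | inv x _ hx => rw [map_inv, ← hx, ← Equiv.Perm.mul_apply, mul_inv_cancel, Equiv.Perm.one_apply]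

lemma mem_Bfin_of_mem_Bfin_succ {n m : ℕ} {β : Binf} (hnm : n ≤ m)
    (hβ : SemiconjBy (rpow 1 (n + 1)) (sh β) β) (hmem : β ∈ Bfin (m + 1)) : β ∈ Bfin m := by
  have hβn : strandRemoval β (n, 1) = (n, β) :=
    calc strandRemoval β (n, 1) = strandRemoval (β * rpow 1 (n + 1)) (0, 1) := by
          rw [map_mul, Equiv.Perm.mul_apply, strandRemoval_rpow_one_apply_zero]
      _ = strandRemoval (rpow 1 (n + 1) * sh β) (0, 1) := by rw [hβ.eq]
      _ = (n, β) := by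
          rw [map_mul, Equiv.Perm.mul_apply, strandRemoval_sh_apply_zero,
            strandRemoval_rpow_one_apply_zero, mul_one]
  have hstable := (strandRemoval_mem_Iic_prod_Bfin_iff hmem (n, 1)).mpr ⟨hnm, one_mem (Bfin m)⟩
  rw [hβn] at hstable
  exact hstable.2

lemma mem_Bfin_iff_semiconjBy_rpow_one (n : ℕ) (β : Binf) :
    β ∈ Bfin n ↔ SemiconjBy (rpow 1 (n + 1)) (sh β) β := by
  refine ⟨semiconjBy_rpow_one_of_mem_Bfin, fun hβ => ?_⟩
  obtain ⟨m, hnm, hm⟩ := exists_ge_mem_Bfin n β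
  exact Nat.decreasingInduction' (fun _ _ hnk => mem_Bfin_of_mem_Bfin_succ hnk hβ) hnm hm

/-- absorption property. For `n ≥ 1`, `β ∈ B_n` iff
`β ▷ 1^[n] = 1^[n+1]`. -/
theorem absorption (n : ℕ) (hn : 1 ≤ n) (β : Binf) :
    β ∈ Bfin n ↔ sc β (rpow 1 n) = rpow 1 (n + 1) := by
  obtain ⟨k, rfl⟩ := Nat.exists_eq_add_of_le' hn
  rw [mem_Bfin_iff_semiconjBy_rpow_one, sc_rpow_one_eq_iff]
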